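/- arXiv:1511.05384 — 2 statements merged into one kernel-verified Lean document; each statement's English description precedes it below -/
import Mathlib

section
/- Let m, k be integers with 1 ≤ m < k, and let p_k, p_m be integers satisfying p_k > 0 and p_m ≥ p_k + ⌊k/m⌋ − 1. Then there exists a connected finite simple graph G such that ψ_k(G) = p_k and ψ_m(G) = p_m. -/
/-- `S` is a `k`-path vertex cover of `G`: every path in `G` on `k` vertices
(i.e. whose support has `k` vertices) contains at least one vertex of `S`. -/
def SimpleGraph.IsPathVertexCover {V : Type*} (G : SimpleGraph V) (k : ℕ) (S : Set V) : Prop :=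
  ∀ ⦃u w : V⦄ (p : G.Walk u w), p.IsPath → p.support.length = k → ∃ x ∈ p.support, x ∈ S

/-- `ψ_k(G)`: the minimum cardinality of a `k`-path vertex cover of `G`. -/
noncomputable def SimpleGraph.pathNum {V : Type*} [Fintype V] (G : SimpleGraph V) (k : ℕ) : ℕ :=
  sInf {m : ℕ | ∃ S : Finset V, G.IsPathVertexCover k ↑S ∧ S.card = m}
/-!
The graph is the join of the complete graph on `pk` vertices, the hubs, with a disjoint union of
paths: one on `m * (k / m) - 1` vertices, several on `m` vertices and `pm` on `m - 1` vertices.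

No component has `k` vertices, so the hubs form a `k`-path vertex cover. A path which runs through
the long component, one hub and a component on `m - 1` vertices has at least `k` vertices. Hubs are
adjacent to everything, so if fewer than `pk` vertices are deleted, the deleted vertices of this
path can be replaced by remaining hubs. Hence `ψ_k = pk`.

If an `m`-path vertex cover misses a hub, it meets each of the `pm` paths on `m - 1` vertices, since
the hub extends each of them to a path on `m` vertices. Otherwise it contains all hubs and also
covers the union of paths, where `ψ_m` is the sum of the values `l / m` over the components on `l`
vertices; the number of components on `m` vertices is chosen so that the total is `pm`.
-/


open Finset SimpleGraph

variable {V W : Type*} {G : SimpleGraph V} {H : SimpleGraph W} {n : ℕ}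

theorem apply_eq_of_isChain {α β : Type*} {R : α → α → Prop} {f : α → β} {l : List α}
    (hl : l.IsChain R) (hf : ∀ x ∈ l, ∀ y ∈ l, R x y → f x = f y) {x y : α} (hx : x ∈ l)
    (hy : y ∈ l) : f x = f y := by
  have hchain : (l.map f).IsChain Eq :=
    (List.isChain_map f).2 <| hl.imp_of_mem_imp fun a b ha hb ↦ hf a ha b hb
  have hpair : l.Pairwise fun a b ↦ f a = f b := List.pairwise_map.1 hchain.pairwise
  have : Std.Symm fun a b ↦ f a = f b := ⟨fun _ _ ↦ Eq.symm⟩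
  exact List.Pairwise.forall_of_forall (R := fun a b ↦ f a = f b) (fun _ _ ↦ rfl) hpair hx hy

section PathVertexCover

theorem exists_mem_of_isPathVertexCover {S : Set V} (hS : G.IsPathVertexCover n S) (hn : n ≠ 0)
    {l : List V} (hl : l.IsChain G.Adj) (hnodup : l.Nodup) (hlen : n ≤ l.length) :
    ∃ x ∈ l, x ∈ S := by
  have htake : (l.take n).length = n := List.length_take_of_le hlen
  have hne : l.take n ≠ [] := List.ne_nil_of_length_pos (by lia)
  obtain ⟨x, hx, hxS⟩ := hS (Walk.ofSupport (l.take n) hne (hl.take n))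
    (by rw [Walk.isPath_def, Walk.support_ofSupport]; exact hnodup.sublist (l.take_sublist n))
    (by rw [Walk.support_ofSupport, htake])
  rw [Walk.support_ofSupport] at hx
  exact ⟨x, List.mem_of_mem_take hx, hxS⟩

theorem isPathVertexCover_preimage {T : Set W} (hT : H.IsPathVertexCover n T) (f : Copy G H) :
    G.IsPathVertexCover n (f ⁻¹' T) := by
  intro u w p hp hlen
  obtain ⟨y, hy, hyT⟩ := hT (p.map f.toHom) (hp.map f.injective) (by simpa using hlen)
  rw [Walk.support_map, List.mem_map] at hy
  obtain ⟨x, hx, rfl⟩ := hy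
  exact ⟨x, hx, hyT⟩

theorem exists_mem_image_of_isPathVertexCover {S : Set V} (hS : G.IsPathVertexCover n S)
    (f : G ↪g H) {u w : W} {p : H.Walk u w} (hp : p.IsPath) (hlen : p.support.length = n)
    (hrange : ∀ x ∈ p.support, x ∈ Set.range f) : ∃ x ∈ p.support, x ∈ f '' S := by
  obtain ⟨l, hl⟩ : p.support ∈ Set.range (List.map f) := by rwa [Set.range_list_map]
  have hadj : l.IsChain G.Adj := by
    have := p.isChain_adj_support
    rw [← hl, List.isChain_map] at this
    exact this.imp fun _ _ ↦ f.map_adj_iff.1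
  have hnodup : l.Nodup := List.Nodup.of_map f (hl ▸ hp.support_nodup)
  have hlength : l.length = n := by rw [← hlen, ← hl, List.length_map]
  have hn : n ≠ 0 := by
    rw [← hlen]
    exact (List.length_pos_of_ne_nil p.support_ne_nil).ne'
  obtain ⟨x, hx, hxS⟩ := exists_mem_of_isPathVertexCover hS hn hadj hnodup hlength.ge
  exact ⟨f x, hl ▸ List.mem_map_of_mem hx, x, hxS, rfl⟩

theorem isPathVertexCover_univ : G.IsPathVertexCover n Set.univ :=
  fun u _ p _ _ ↦ ⟨u, p.start_mem_support, Set.mem_univ u⟩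

end PathVertexCover

section PathNum

variable [Fintype V] [Fintype W]

theorem pathNum_le_card {S : Finset V} (hS : G.IsPathVertexCover n S) : G.pathNum n ≤ #S :=
  Nat.sInf_le ⟨S, hS, rfl⟩

variable (G n) in
theorem exists_isPathVertexCover_card_eq_pathNum :
    ∃ S : Finset V, G.IsPathVertexCover n S ∧ #S = G.pathNum n :=
  Nat.sInf_mem (s := {m | ∃ S : Finset V, G.IsPathVertexCover n S ∧ #S = m})
    ⟨_, univ, by simpa using isPathVertexCover_univ, rfl⟩

theorem le_pathNum {a : ℕ} (h : ∀ T : Finset V, G.IsPathVertexCover n T → a ≤ #T) :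
    a ≤ G.pathNum n := by
  obtain ⟨T, hT, hcard⟩ := exists_isPathVertexCover_card_eq_pathNum G n
  exact hcard ▸ h T hT

theorem pathNum_one : G.pathNum 1 = Fintype.card V := by
  refine le_antisymm (pathNum_le_card (by simpa using isPathVertexCover_univ))
    (le_pathNum fun T hT ↦ ?_)
  have hmem : ∀ v, v ∈ T := fun v ↦ by simpa using hT (.nil : G.Walk v v) .nil rfl
  rw [eq_univ_of_forall hmem, card_univ]

end PathNum

section PathGraph

variable {l : ℕ}

theorem isPathVertexCover_pathGraph_setOf_dvd (hn : n ≠ 0) :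
    (pathGraph l).IsPathVertexCover n {x | n ∣ x.val + 1} := by
  intro u w p hp hlen
  by_contra! havoid
  have hblock : ∀ x ∈ p.support, x.val / n = u.val / n := by
    refine fun x hx ↦ apply_eq_of_isChain (f := fun x : Fin l ↦ x.val / n) p.isChain_adj_support
      (fun y hy z hz hyz ↦ ?_) hx p.start_mem_support
    rcases pathGraph_adj.1 hyz with h | h
    · simpa [← h] using (Nat.succ_div_of_not_dvd (havoid y hy)).symm
    · simpa [← h] using Nat.succ_div_of_not_dvd (havoid z hz)
  have hmaps : ∀ x ∈ p.support.toFinset, x.val % n ∈ range (n - 1) := by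
    intro x hx
    have hndvd : ¬n ∣ x.val + 1 := havoid x (List.mem_toFinset.1 hx)
    have hne : x.val % n ≠ n - 1 := by
      obtain ⟨n, rfl⟩ := Nat.exists_eq_succ_of_ne_zero hn
      rwa [Nat.dvd_iff_mod_eq_zero, Nat.succ_mod_succ_eq_zero_iff] at hndvd
    have hlt : x.val % n < n := Nat.mod_lt _ (Nat.pos_of_ne_zero hn)
    exact mem_range.2 (by lia)
  have hinj : Set.InjOn (fun x : Fin l ↦ x.val % n) p.support.toFinset := by
    intro x hx y hy (hxy : x.val % n = y.val % n)
    rw [mem_coe, List.mem_toFinset] at hx hy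
    refine Fin.ext ?_
    rw [← Nat.div_add_mod x n, ← Nat.div_add_mod y n, hblock x hx, hblock y hy, hxy]
  have hcard := card_le_card_of_injOn _ hmaps hinj
  rw [List.toFinset_card_of_nodup hp.support_nodup, hlen, card_range] at hcard
  lia

theorem exists_mem_div_eq_of_isPathVertexCover_pathGraph (hn : n ≠ 0) {T : Set (Fin l)}
    (hT : (pathGraph l).IsPathVertexCover n T) {j : ℕ} (hj : j < l / n) :
    ∃ x ∈ T, x.val / n = j := by
  have hlt (i : Fin n) : n * j + i < l := by
    have h₁ : n * (j + 1) ≤ n * (l / n) := Nat.mul_le_mul_left n hj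
    have h₂ := Nat.mul_div_le l n
    lia
  obtain ⟨x, hx, hxT⟩ := exists_mem_of_isPathVertexCover hT hn
    (l := List.ofFn fun i : Fin n ↦ ⟨n * j + i, hlt i⟩)
    (List.isChain_ofFn.2 fun i hi ↦ pathGraph_adj.2 <| .inl rfl)
    (List.nodup_ofFn.2 fun i i' h ↦ by simpa [Fin.ext_iff] using h) (by simp)
  obtain ⟨i, rfl⟩ := List.mem_ofFn.1 hx
  exact ⟨_, hxT, by simp [Nat.mul_add_div (Nat.pos_of_ne_zero hn)]⟩

theorem pathNum_pathGraph (hn : n ≠ 0) : (pathGraph l).pathNum n = l / n := by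
  refine le_antisymm ?_ (le_pathNum fun T hT ↦ ?_)
  · have hcover : (pathGraph l).IsPathVertexCover n ({x | n ∣ x.val + 1} : Finset (Fin l)) := by
      simpa using isPathVertexCover_pathGraph_setOf_dvd hn
    calc (pathGraph l).pathNum n
      _ ≤ #{x : Fin l | n ∣ x.val + 1} := pathNum_le_card hcover
      _ = #{i ∈ range l | n ∣ i + 1} := by
        rw [← card_map Fin.valEmbedding]
        congr 1
        ext i
        simp [Fin.exists_iff, and_comm]
      _ = l / n := Nat.card_multiples l n
  · have hsurj : Set.SurjOn (fun x : Fin l ↦ x.val / n) T (range (l / n)) := fun j hj ↦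
      exists_mem_div_eq_of_isPathVertexCover_pathGraph hn hT (mem_range.1 hj)
    simpa using card_le_card_of_surjOn _ hsurj

end PathGraph

section SigmaGraph

variable {C : Type*} {X : C → Type*}

/-- The disjoint union of a family of graphs. -/
def sigmaGraph (F : ∀ c, SimpleGraph (X c)) : SimpleGraph (Σ c, X c) :=
  ⨆ c, (F c).map (Function.Embedding.sigmaMk c)

variable {F : ∀ c, SimpleGraph (X c)}

theorem sigmaGraph_adj {x y : Σ c, X c} :
    (sigmaGraph F).Adj x y ↔ ∃ c u v, (F c).Adj u v ∧ ⟨c, u⟩ = x ∧ ⟨c, v⟩ = y := by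
  simp [sigmaGraph, SimpleGraph.iSup_adj, SimpleGraph.map_adj]

variable (F) in
/-- The inclusion of a component into a disjoint union of graphs. -/
def sigmaGraphMk (c : C) : F c ↪g sigmaGraph F where
  toEmbedding := .sigmaMk c
  map_rel_iff' {u v} := by
    rw [sigmaGraph_adj]
    constructor
    · rintro ⟨c', a, b, hab, ha, hb⟩
      cases ha
      cases hb
      exact hab
    · exact fun h ↦ ⟨c, u, v, h, rfl, rfl⟩

@[simp]
theorem coe_sigmaGraphMk (c : C) : ⇑(sigmaGraphMk F c) = Sigma.mk c :=
  rfl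

theorem pathNum_sigmaGraph [Fintype C] [∀ c, Fintype (X c)] :
    (sigmaGraph F).pathNum n = ∑ c, (F c).pathNum n := by
  classical
  refine le_antisymm ?_ (le_pathNum fun T hT ↦ ?_)
  · choose S hS hcard using fun c ↦ exists_isPathVertexCover_card_eq_pathNum (F c) n
    suffices (sigmaGraph F).IsPathVertexCover n (univ.sigma S : Finset (Σ c, X c)) by
      simpa [hcard] using pathNum_le_card this
    intro u w p hp hlen
    have hrange : ∀ x ∈ p.support, x ∈ Set.range (sigmaGraphMk F u.1) := by
      intro x hx
      have hfst : x.1 = u.1 := apply_eq_of_isChain p.isChain_adj_support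
        (fun y _ z _ hyz ↦ by
          obtain ⟨c, a, b, -, rfl, rfl⟩ := sigmaGraph_adj.1 hyz
          rfl) hx p.start_mem_support
      obtain ⟨c, a⟩ := x
      obtain rfl : c = u.1 := hfst
      exact ⟨a, rfl⟩
    obtain ⟨_, hx, a, ha, rfl⟩ :=
      exists_mem_image_of_isPathVertexCover (hS u.1) (sigmaGraphMk F u.1) hp hlen hrange
    exact ⟨_, hx, by simpa using ha⟩
  · calc ∑ c, (F c).pathNum n
      _ ≤ ∑ c, #(T.preimage (Sigma.mk c) sigma_mk_injective.injOn) := sum_le_sum fun c _ ↦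
        pathNum_le_card (by simpa using isPathVertexCover_preimage hT (sigmaGraphMk F c).toCopy)
      _ = #T := by rw [← card_sigma, sigma_preimage_mk_of_subset T (subset_univ _)]

end SigmaGraph

section Universal

-- Universal vertices outside `T` can be substituted for any vertices of `l` without breaking
-- adjacency; the vertices of `l` in `U` are replaced too, so that no vertex is used twice.
theorem exists_isChain_forall_notMem_of_isUniversal [DecidableEq V] {U T : Finset V}
    (hU : ∀ u ∈ U, G.IsUniversal u) {l : List V} (hl : l.IsChain G.Adj) (hnodup : l.Nodup)
    (hcard : #(l.toFinset ∩ (T ∪ U)) ≤ #(U \ T)) :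
    ∃ l' : List V, l'.IsChain G.Adj ∧ l'.Nodup ∧ l'.length = l.length ∧ ∀ v ∈ l', v ∉ T := by
  rcases isEmpty_or_nonempty V with _ | _
  · exact ⟨l, hl, hnodup, rfl, isEmptyElim⟩
  have hencard : Set.encard (↑(l.toFinset ∩ (T ∪ U)) : Set V) ≤ Set.encard (↑(U \ T) : Set V) := by
    simpa only [Set.encard_coe_eq_coe_finsetCard, Nat.cast_le]
  obtain ⟨f, hf, hfinj⟩ := (finite_toSet _).exists_injOn_of_encard_le hencard
  have hf_mem (v) (hv : v ∈ l) (hvTU : v ∈ T ∪ U) : f v ∈ U \ T :=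
    hf (mem_inter.2 ⟨List.mem_toFinset.2 hv, hvTU⟩)
  let σ := (T ∪ U).piecewise f id
  have hσ_mem : ∀ v ∈ T ∪ U, σ v = f v := fun _ ↦ piecewise_eq_of_mem _ _ _
  have hσ_notMem : ∀ v ∉ T ∪ U, σ v = v := fun _ ↦ piecewise_eq_of_notMem _ _ _
  have hσT : ∀ v ∈ l, σ v ∉ T := by grind
  have hσU : ∀ v ∈ l, σ v ∈ U ∨ σ v = v := by grind
  have hσinj : ∀ v ∈ l, ∀ w ∈ l, σ v = σ w → v = w := by
    intro v hv w hw hvw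
    by_cases hv' : v ∈ T ∪ U <;> by_cases hw' : w ∈ T ∪ U
    · rw [hσ_mem v hv', hσ_mem w hw'] at hvw
      exact hfinj (by simp_all) (by simp_all) hvw
    all_goals grind
  have hnodup' : (l.map σ).Nodup := (List.nodup_map_iff_inj_on hnodup).2 hσinj
  have hadj : ∀ v ∈ l, ∀ w ∈ l, G.Adj v w → G.Adj (σ v) (σ w) := by
    intro v hv w hw hvw
    have hne : σ v ≠ σ w := fun h ↦ hvw.ne (hσinj v hv w hw h)
    rcases hσU v hv with hvU | hv'
    · exact hU _ hvU hne
    rcases hσU w hw with hwU | hw'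
    · exact (hU _ hwU hne.symm).symm
    · rwa [hv', hw']
  refine ⟨l.map σ, (List.isChain_map σ).2 ?_, hnodup', List.length_map _, ?_⟩
  · exact hl.imp_of_mem_imp fun v w hv hw ↦ hadj v hv w hw
  · simpa using hσT

theorem card_lt_card_add_of_isUniversal [DecidableEq V] {U T : Finset V}
    (hU : ∀ u ∈ U, G.IsUniversal u) (hT : G.IsPathVertexCover n T) (hn : n ≠ 0) {l : List V}
    (hl : l.IsChain G.Adj) (hnodup : l.Nodup) (hlen : n ≤ l.length) :
    #U < #T + #(U ∩ l.toFinset) := by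
  by_contra! hle
  have hcard : #(l.toFinset ∩ (T ∪ U)) ≤ #(U \ T) := by
    have hunion : l.toFinset ∩ (T ∪ U) ⊆ T \ U ∪ U ∩ l.toFinset := by grind
    have h₁ := (card_le_card hunion).trans (card_union_le _ _)
    have h₂ := card_sdiff_add_card_inter T U
    have h₃ := card_sdiff_add_card_inter U T
    rw [inter_comm] at h₃
    lia
  obtain ⟨l', hl', hnodup', hlen', hl'T⟩ :=
    exists_isChain_forall_notMem_of_isUniversal hU hl hnodup hcard
  obtain ⟨x, hx, hxT⟩ := exists_mem_of_isPathVertexCover hT hn hl' hnodup' (hlen'.symm ▸ hlen)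
  exact hl'T x hx hxT

end Universal

section Join

/-- The join of two graphs: their disjoint union, with every vertex of the first graph joined to
every vertex of the second. -/
def joinGraph (G : SimpleGraph V) (H : SimpleGraph W) : SimpleGraph (V ⊕ W) :=
  (G ⊕g H) ⊔ completeBipartiteGraph V W

variable (G H) in
/-- The inclusion of the second graph into a join. -/
def joinGraphInr : H ↪g joinGraph G H where
  toEmbedding := .inr
  map_rel_iff' := by simp [joinGraph]

@[simp]
theorem coe_joinGraphInr : ⇑(joinGraphInr G H) = Sum.inr :=
  rfl

theorem joinGraph_adj_inl_inr (v : V) (w : W) : (joinGraph G H).Adj (.inl v) (.inr w) := by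
  simp [joinGraph]

theorem isUniversal_inl_joinGraph_top (v : V) :
    (joinGraph (⊤ : SimpleGraph V) H).IsUniversal (.inl v) := by
  rintro (v' | w) h
  · simpa [joinGraph] using h
  · exact joinGraph_adj_inl_inr v w

theorem isPathVertexCover_preimage_inr_of_inl_notMem {T : Set (V ⊕ W)}
    (hT : (joinGraph G H).IsPathVertexCover (n + 1) T) {v : V} (hv : .inl v ∉ T) :
    H.IsPathVertexCover n (.inr ⁻¹' T) := by
  intro u w p hp hlen
  let q : (joinGraph G H).Walk (.inr u) (.inr w) := p.map (joinGraphInr G H).toHom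
  have hq : q.support = p.support.map .inr := p.support_map _
  have hvq : .inl v ∉ q.support := by simp [hq]
  obtain ⟨x, hx, hxT⟩ := hT (.cons (joinGraph_adj_inl_inr v u) q)
    ((hp.map (joinGraphInr G H).injective).cons hvq)
    (by rw [Walk.support_cons, hq, List.length_cons, List.length_map, hlen])
  rw [Walk.support_cons, hq, List.mem_cons, List.mem_map] at hx
  obtain rfl | ⟨y, hy, rfl⟩ := hx
  · exact absurd hxT hv
  · exact ⟨y, hy, hxT⟩

variable [Fintype V] [Fintype W]

theorem pathNum_joinGraph_le :
    (joinGraph G H).pathNum n ≤ Fintype.card V + H.pathNum n := by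
  obtain ⟨S, hS, hcard⟩ := exists_isPathVertexCover_card_eq_pathNum H n
  suffices (joinGraph G H).IsPathVertexCover n (univ.disjSum S : Finset (V ⊕ W)) by
    simpa [hcard] using pathNum_le_card this
  intro u w p hp hlen
  by_cases hinl : ∃ v, .inl v ∈ p.support
  · obtain ⟨v, hv⟩ := hinl
    exact ⟨.inl v, hv, by simp⟩
  · have hrange : ∀ x ∈ p.support, x ∈ Set.range (joinGraphInr G H) := by
      rintro (v | w) hx
      · exact absurd ⟨v, hx⟩ hinl
      · exact ⟨w, rfl⟩
    obtain ⟨_, hx, a, ha, rfl⟩ :=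
      exists_mem_image_of_isPathVertexCover hS (joinGraphInr G H) hp hlen hrange
    exact ⟨_, hx, by simpa using ha⟩

theorem pathNum_joinGraph_succ
    (h : Fintype.card V + H.pathNum (n + 1) ≤ H.pathNum n) :
    (joinGraph G H).pathNum (n + 1) = Fintype.card V + H.pathNum (n + 1) := by
  refine le_antisymm pathNum_joinGraph_le (le_pathNum fun T hT ↦ ?_)
  have hcoe : (T.toRight : Set W) = Sum.inr ⁻¹' (T : Set (V ⊕ W)) := by
    ext
    simp
  rw [← card_toLeft_add_card_toRight (u := T)]
  by_cases hleft : ∀ v : V, .inl v ∈ T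
  · have htoLeft : T.toLeft = univ := eq_univ_of_forall fun v ↦ mem_toLeft.2 (hleft v)
    have htoRight : H.pathNum (n + 1) ≤ #T.toRight :=
      pathNum_le_card (hcoe ▸ isPathVertexCover_preimage hT (joinGraphInr G H).toCopy)
    rwa [htoLeft, card_univ, Nat.add_le_add_iff_left]
  · push Not at hleft
    obtain ⟨v, hv⟩ := hleft
    have htoRight : H.pathNum n ≤ #T.toRight :=
      pathNum_le_card (hcoe ▸ isPathVertexCover_preimage_inr_of_inl_notMem hT hv)
    lia

theorem card_le_pathNum_joinGraph_top (hn : n ≠ 0) {l₁ l₂ : List W} (hl₁ : l₁.IsChain H.Adj)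
    (hl₂ : l₂.IsChain H.Adj) (hnodup : (l₁ ++ l₂).Nodup) (hlen : n ≤ l₁.length + 1 + l₂.length) :
    Fintype.card V ≤ (joinGraph (⊤ : SimpleGraph V) H).pathNum n := by
  classical
  refine le_pathNum fun T hT ↦ ?_
  rcases isEmpty_or_nonempty V with _ | ⟨⟨v⟩⟩
  · simp
  let l : List (V ⊕ W) := l₁.map .inr ++ .inl v :: l₂.map .inr
  have hl : l.IsChain (joinGraph (⊤ : SimpleGraph V) H).Adj := by
    have hinr {l' : List W} (hl' : l'.IsChain H.Adj) :
        (l'.map .inr).IsChain (joinGraph (⊤ : SimpleGraph V) H).Adj :=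
      (List.isChain_map _).2 <| hl'.imp fun _ _ ↦ (joinGraphInr ⊤ H).map_adj_iff.2
    refine List.isChain_append.2 ⟨hinr hl₁, List.isChain_cons.2 ⟨?_, hinr hl₂⟩, ?_⟩
    · intro x hx
      obtain ⟨w, -, rfl⟩ := List.mem_map.1 (List.mem_of_mem_head? hx)
      exact joinGraph_adj_inl_inr v w
    · rintro x hx _ ⟨⟩
      obtain ⟨w, -, rfl⟩ := List.mem_map.1 (List.mem_of_mem_getLast? hx)
      exact (joinGraph_adj_inl_inr v w).symm
  have hnodup' : l.Nodup := by
    rw [List.nodup_middle, ← List.map_append, List.nodup_cons]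
    exact ⟨by simp, hnodup.map Sum.inr_injective⟩
  have hinter : univ.map .inl ∩ l.toFinset = {.inl v} := by
    ext (v' | w) <;> simp [l]
  have := card_lt_card_add_of_isUniversal (U := univ.map .inl)
    (by simp [isUniversal_inl_joinGraph_top]) hT hn hl hnodup' (by grind)
  rw [hinter, card_map, card_univ, card_singleton] at this
  lia

end Join

section SigmaPathGraph

theorem isChain_finRange_pathGraph_adj (l : ℕ) : (List.finRange l).IsChain (pathGraph l).Adj := by
  rw [← List.ofFn_id, List.isChain_ofFn]
  exact fun i hi ↦ pathGraph_adj.2 (.inl rfl)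

theorem card_le_pathNum_joinGraph_top_sigmaGraph_pathGraph {C : Type*} [Fintype C] [Fintype V]
    {len : C → ℕ} (hn : n ≠ 0) {c d : C} (hcd : c ≠ d) (hlen : n ≤ len c + 1 + len d) :
    Fintype.card V ≤
      (joinGraph (⊤ : SimpleGraph V) (sigmaGraph fun c ↦ pathGraph (len c))).pathNum n := by
  let l (c : C) : List (Σ c, Fin (len c)) := (List.finRange (len c)).map (Sigma.mk c)
  have hl (c : C) : (l c).IsChain (sigmaGraph fun c ↦ pathGraph (len c)).Adj :=
    (List.isChain_map _).2 <| (isChain_finRange_pathGraph_adj _).imp fun _ _ ↦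
      (sigmaGraphMk (fun c ↦ pathGraph (len c)) c).map_adj_iff.2
  have hnodup (c : C) : (l c).Nodup := (List.nodup_finRange _).map sigma_mk_injective
  have hdisj : (l c).Disjoint (l d) := by simp [List.disjoint_left, l, hcd.symm]
  exact card_le_pathNum_joinGraph_top hn (hl c) (hl d) ((hnodup c).append (hnodup d) hdisj)
    (by simpa [l] using hlen)

end SigmaPathGraph

section PathForest

variable {m q a b : ℕ}

/-- The number of vertices of each component of `pathForest m q a b`. -/
def pathForestOrder (m q a b : ℕ) : Unit ⊕ Fin a ⊕ Fin b → ℕ :=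
  Sum.elim (fun _ ↦ m * q - 1) (Sum.elim (fun _ ↦ m) fun _ ↦ m - 1)

/-- The disjoint union of one path on `m * q - 1` vertices, `a` paths on `m` vertices and `b` paths
on `m - 1` vertices, whose join with a complete graph realizes the prescribed path numbers. -/
abbrev pathForest (m q a b : ℕ) : SimpleGraph (Σ c, Fin (pathForestOrder m q a b c)) :=
  sigmaGraph fun c ↦ pathGraph (pathForestOrder m q a b c)

theorem pathNum_pathForest (hn : n ≠ 0) :
    (pathForest m q a b).pathNum n = (m * q - 1) / n + (a * (m / n) + b * ((m - 1) / n)) := by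
  simp_rw [pathNum_sigmaGraph, pathNum_pathGraph hn]
  simp [pathForestOrder]

theorem pathNum_pathForest_self (hm : 1 ≤ m) : (pathForest m q a b).pathNum m = q - 1 + a := by
  have hlong : (m * q - 1) / m = q - 1 := by
    rcases q.eq_zero_or_pos with rfl | hq
    · simp
    · simpa using Nat.mul_sub_div 0 m q (Nat.mul_pos hm hq)
  rw [pathNum_pathForest (by lia), hlong, Nat.div_self hm, Nat.div_eq_of_lt (by lia : m - 1 < m)]
  lia

theorem pathNum_pathForest_eq_zero (hmn : m < n) (hqn : m * q ≤ n) :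
    (pathForest m q a b).pathNum n = 0 := by
  rw [pathNum_pathForest (by lia), Nat.div_eq_of_lt (by lia : m * q - 1 < n),
    Nat.div_eq_of_lt hmn, Nat.div_eq_of_lt (by lia : m - 1 < n)]
  simp

theorem le_pathNum_pathForest_succ (hn : n ≠ 0) : b ≤ (pathForest (n + 1) q a b).pathNum n := by
  rw [pathNum_pathForest hn, Nat.add_sub_cancel, Nat.div_self (Nat.pos_of_ne_zero hn)]
  lia

variable [Fintype V]

theorem pathNum_joinGraph_pathForest_self (hm : 1 ≤ m) (hb : Fintype.card V + (q - 1 + a) ≤ b) :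
    (joinGraph G (pathForest m q a b)).pathNum m = Fintype.card V + (q - 1 + a) := by
  obtain ⟨n, rfl⟩ := Nat.exists_eq_add_of_le' hm
  rw [← pathNum_pathForest_self (b := b) hm] at hb ⊢
  rcases eq_or_ne n 0 with rfl | hn
  · simp [pathNum_one]
  · exact pathNum_joinGraph_succ (hb.trans (le_pathNum_pathForest_succ hn))

theorem pathNum_joinGraph_top_pathForest (hmn : m < n) (hqn : m * q ≤ n) (hnq : n < m * q + m)
    (hb : 0 < b) :
    (joinGraph (⊤ : SimpleGraph V) (pathForest m q a b)).pathNum n = Fintype.card V := by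
  refine le_antisymm ?_ ?_
  · simpa [pathNum_pathForest_eq_zero hmn hqn] using
      pathNum_joinGraph_le (G := (⊤ : SimpleGraph V)) (H := pathForest m q a b) (n := n)
  · refine card_le_pathNum_joinGraph_top_sigmaGraph_pathGraph (by lia)
      (Sum.inl_ne_inr : .inl () ≠ .inr (.inr ⟨0, hb⟩)) ?_
    simp only [pathForestOrder, Sum.elim_inl, Sum.elim_inr]
    lia

end PathForest

theorem exists_graph_with_prescribed_psi (m k : ℕ) (hm : 1 ≤ m) (hmk : m < k)
    (pk pm : ℕ) (hpk : 0 < pk) (hpm : pk + k / m - 1 ≤ pm) :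
    ∃ (V : Type) (instV : Fintype V) (G : SimpleGraph V),
      G.Connected ∧ @SimpleGraph.pathNum V instV G k = pk ∧
      @SimpleGraph.pathNum V instV G m = pm := by
  have hq : 0 < k / m := Nat.div_pos hmk.le hm
  have hkq : k < m * (k / m) + m := Nat.lt_mul_div_succ k hm
  obtain ⟨a, rfl⟩ : ∃ a, pm = pk + (k / m - 1 + a) := ⟨pm - (pk + (k / m - 1)), by lia⟩
  let b := pk + (k / m - 1 + a)
  refine ⟨_, inferInstance, joinGraph (⊤ : SimpleGraph (Fin pk)) (pathForest m (k / m) a b),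
    .of_isUniversal (isUniversal_inl_joinGraph_top ⟨0, hpk⟩), ?_, ?_⟩
  · simpa using pathNum_joinGraph_top_pathForest (V := Fin pk) hmk (Nat.mul_div_le k m) hkq
      (Nat.add_pos_left hpk _ : 0 < b)
  · simpa using pathNum_joinGraph_pathForest_self (V := Fin pk) (b := b) hm (by simp [b])
end

section
/- Let G = (V,E) be a connected simple graph on n ≥ 4 vertices with V = {p_1, …, p_{n−1}, q}, where p_1 − p_2 − ⋯ − p_{n−1} is a path in G. If ψ_{n−1}(G) = 2 and ψ_n(G) = 0, then the degree d(q) of q in G satisfies 2 ≤ d(q) ≤ ⌈(n−3)/2⌉. -/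
/-!
Let `q` lie off a path `p₁ ⋯ pₘ`, where `m = n - 1`. The path has `m + 1` gaps, counting the two
ends. If all the path vertices bordering one of these gaps were adjacent to `q`, then inserting `q`
there would give a path on `n` vertices, contrary to `ψ_n = 0`. Hence `q` is adjacent neither to an
end of the path nor to two consecutive vertices of it, and so to at most `(m - 1) / 2` of them.

For the lower bound, a path on `n - 1 ≥ 2` vertices either contains `q`, and then also a neighbor
of `q`, or contains every other vertex. So `N(q)` is an `(n - 1)`-path vertex cover unless it is
empty, in which case any single vertex other than `q` is one.
-/

namespace PathVertexCover

theorem mem_of_card_le_length_add_one {V : Type*} [Fintype V] {l : List V} {q x : V} (hl : l.Nodup)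
    (hq : q ∉ l) (hcard : Fintype.card V ≤ l.length + 1) (hx : x ≠ q) : x ∈ l := by
  by_contra hxl
  have hnodup : (q :: x :: l).Nodup := by simp [hl, hq, hxl, hx.symm]
  have hlen := hnodup.length_le_card
  simp only [List.length_cons] at hlen
  omega

theorem two_mul_countP_le_length_of_isChain_not_and {α : Type*} {P : α → Prop} [DecidablePred P] :
    ∀ {l : List α}, l.IsChain (fun x y => ¬(P x ∧ P y)) → (∀ x ∈ l.getLast?, ¬P x) →
      2 * l.countP P ≤ l.length
  | [], _, _ => by simp
  | [a], _, hlast => by simp_all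
  | a :: b :: l, hchain, hlast => by
    by_cases ha : P a
    · have hb : ¬P b := fun hb => hchain.rel ⟨ha, hb⟩
      have hl := two_mul_countP_le_length_of_isChain_not_and hchain.of_cons.of_cons (by grind)
      rw [List.countP_cons_of_pos (by simpa using ha), List.countP_cons_of_neg (by simpa using hb)]
      simp only [List.length_cons]
      omega
    · have hbl := two_mul_countP_le_length_of_isChain_not_and hchain.of_cons (by grind)
      rw [List.countP_cons_of_neg (by simpa using ha), List.length_cons]
      omega

variable {V : Type*} {G : SimpleGraph V} {k : ℕ} {q : V}

theorem exists_adj_of_mem_support {u w x : V} {p : G.Walk u w} (hp : ¬p.Nil)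
    (hx : x ∈ p.support) : ∃ y ∈ p.support, G.Adj x y := by
  obtain ⟨e, he, hxe⟩ := (p.mem_support_iff_exists_mem_edges_of_not_nil hp).mp hx
  obtain ⟨y, rfl⟩ := hxe
  exact ⟨y, p.snd_mem_support_of_mem_edges he, p.adj_of_mem_edges he⟩

theorem ncard_neighborSet_eq_countP [DecidablePred (G.Adj q)] {l : List V} (hnodup : l.Nodup)
    (hN : ∀ x, G.Adj q x → x ∈ l) : (G.neighborSet q).ncard = l.countP (G.Adj q) := by
  classical
  rw [← hnodup.card_eq_countP, ← Set.ncard_coe_finset]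
  congr 1
  ext x
  simpa using hN x

variable [Fintype V]

theorem exists_isPathVertexCover_card_eq_pathNum (G : SimpleGraph V) (k : ℕ) :
    ∃ S : Finset V, G.IsPathVertexCover k S ∧ S.card = G.pathNum k :=
  Nat.sInf_mem (s := {m | ∃ S : Finset V, G.IsPathVertexCover k S ∧ S.card = m})
    ⟨_, Finset.univ, fun u _ w _ _ => ⟨u, w.start_mem_support, by simp⟩, rfl⟩

theorem pathNum_le_card {S : Finset V} (hS : G.IsPathVertexCover k S) : G.pathNum k ≤ S.card :=
  Nat.sInf_le ⟨S, hS, rfl⟩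

theorem isPathVertexCover_of_neighborSet_subset (hcard : 3 ≤ Fintype.card V) {S : Set V} {v : V}
    (hN : G.neighborSet q ⊆ S) (hvS : v ∈ S) (hvq : v ≠ q) :
    G.IsPathVertexCover (Fintype.card V - 1) S := by
  intro a b w hw hlen
  by_cases hq : q ∈ w.support
  · have hnil : ¬w.Nil := by
      intro hnil
      rw [SimpleGraph.Walk.nil_iff_support_eq.mp hnil, List.length_singleton] at hlen
      omega
    obtain ⟨y, hy, hadj⟩ := exists_adj_of_mem_support hnil hq
    exact ⟨y, hy, hN hadj⟩
  · exact ⟨v, mem_of_card_le_length_add_one hw.support_nodup hq (by omega) hvq, hvS⟩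

theorem pathNum_card_sub_one_le_max_one_ncard_neighborSet (hcard : 3 ≤ Fintype.card V) (q : V) :
    G.pathNum (Fintype.card V - 1) ≤ max 1 (G.neighborSet q).ncard := by
  classical
  rcases (G.neighborSet q).eq_empty_or_nonempty with hempty | ⟨v, hv⟩
  · have : Nontrivial V := Fintype.one_lt_card_iff_nontrivial.mp (by omega)
    obtain ⟨v, hvq⟩ := exists_ne q
    have hcover := isPathVertexCover_of_neighborSet_subset (G := G) (S := ({v} : Finset V))
      hcard (by simp [hempty]) (by simp) hvq
    exact (pathNum_le_card hcover).trans (by simp)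
  · have hcover := isPathVertexCover_of_neighborSet_subset (G := G)
      (S := (G.neighborSet q).toFinset) hcard (by simp) (by simpa using hv) hv.ne'
    exact (pathNum_le_card hcover).trans (by simp [Set.ncard_eq_toFinset_card'])

theorem pathNum_length_pos {l : List V} (hne : l ≠ []) (hchain : l.IsChain G.Adj)
    (hnodup : l.Nodup) : 0 < G.pathNum l.length := by
  obtain ⟨S, hS, hcard⟩ := exists_isPathVertexCover_card_eq_pathNum G l.length
  obtain ⟨x, -, hx⟩ := hS (SimpleGraph.Walk.ofSupport l hne hchain)
    (by rwa [SimpleGraph.Walk.isPath_def, SimpleGraph.Walk.support_ofSupport])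
    (by rw [SimpleGraph.Walk.support_ofSupport])
  exact hcard ▸ Finset.card_pos.mpr ⟨x, hx⟩

theorem pathNum_pos_of_insert {l₁ l₂ : List V} (hchain : (l₁ ++ l₂).IsChain G.Adj)
    (hnodup : (l₁ ++ l₂).Nodup) (hq : q ∉ l₁ ++ l₂) (hlast : ∀ x ∈ l₁.getLast?, G.Adj q x)
    (hhead : ∀ y ∈ l₂.head?, G.Adj q y) : 0 < G.pathNum ((l₁ ++ l₂).length + 1) := by
  have hchain' : (l₁ ++ q :: l₂).IsChain G.Adj :=
    hchain.left_of_append.append (hchain.right_of_append.cons hhead) (by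
      simpa using fun x hx => (hlast x hx).symm)
  have hnodup' : (l₁ ++ q :: l₂).Nodup := List.nodup_middle.mpr (hnodup.cons hq)
  simpa [add_assoc] using pathNum_length_pos (by simp) hchain' hnodup'

theorem two_mul_countP_adj_lt_length [DecidablePred (G.Adj q)] {l : List V}
    (hchain : l.IsChain G.Adj) (hnodup : l.Nodup) (hq : q ∉ l)
    (hno : G.pathNum (l.length + 1) = 0) : 2 * l.countP (G.Adj q) < l.length := by
  have hgap : ∀ l₁ l₂, l = l₁ ++ l₂ → (∀ x ∈ l₁.getLast?, G.Adj q x) →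
      ¬∀ y ∈ l₂.head?, G.Adj q y := by
    rintro l₁ l₂ rfl hlast hhead
    exact (pathNum_pos_of_insert hchain hnodup hq hlast hhead).ne' hno
  have hsparse : l.IsChain fun x y => ¬(G.Adj q x ∧ G.Adj q y) := by
    rw [List.isChain_iff_forall_rel_of_append_cons_cons]
    rintro x y l₁ l₂ hl ⟨hx, hy⟩
    exact hgap (l₁ ++ [x]) (y :: l₂) (by simpa using hl) (by simpa using hx) (by simpa using hy)
  have hhead : ¬∀ x ∈ l.head?, G.Adj q x := hgap [] l rfl (by simp)
  have hlast : ¬∀ x ∈ l.getLast?, G.Adj q x := fun h => hgap l [] (by simp) h (by simp)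
  cases l with
  | nil => simp at hhead
  | cons a l =>
    have ha : ¬G.Adj q a := by simpa using hhead
    have hl := two_mul_countP_le_length_of_isChain_not_and hsparse.of_cons (by grind)
    rw [List.countP_cons_of_neg (by simpa using ha), List.length_cons]
    omega

end PathVertexCover

/-- Corollary 10 of the paper: `2 ≤ d(q) ≤ ⌈(n-3)/2⌉`. -/
theorem degree_bound_of_no_hamiltonian_path {V : Type*} [Fintype V] (G : SimpleGraph V)
    (n : ℕ) (hn : 4 ≤ n) (hcard : Fintype.card V = n)
    (p : Fin (n - 1) → V) (q : V)
    (hinj : Function.Injective p) (hq : q ∉ Set.range p)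
    (hpath : ∀ (i : ℕ) (h : i + 1 < n - 1),
      G.Adj (p ⟨i, by omega⟩) (p ⟨i + 1, h⟩))
    (hconn : G.Connected)
    (h1 : G.pathNum (n - 1) = 2) (h2 : G.pathNum n = 0) :
    2 ≤ (G.neighborSet q).ncard ∧ (G.neighborSet q).ncard ≤ (n - 3 + 1) / 2 := by
  classical
  have hchain : (List.ofFn p).IsChain G.Adj := List.isChain_ofFn.mpr hpath
  have hnodup : (List.ofFn p).Nodup := List.nodup_ofFn.mpr hinj
  have hql : q ∉ List.ofFn p := by rwa [List.mem_ofFn']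
  have hlen : (List.ofFn p).length + 1 = n := by rw [List.length_ofFn]; omega
  constructor
  · have hmax := PathVertexCover.pathNum_card_sub_one_le_max_one_ncard_neighborSet (G := G)
      (by omega) q
    rw [hcard, h1] at hmax
    omega
  · have hN : ∀ x, G.Adj q x → x ∈ List.ofFn p := fun x hx =>
      PathVertexCover.mem_of_card_le_length_add_one hnodup hql (by omega) hx.ne'
    have hlt := PathVertexCover.two_mul_countP_adj_lt_length hchain hnodup hql (by rwa [hlen])
    rw [← PathVertexCover.ncard_neighborSet_eq_countP hnodup hN] at hlt
    omega
end
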